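/- arXiv:2012.02572 — 2 statements merged into one kernel-verified Lean document; each statement's English description precedes it below -/
import Mathlib

section
/- For every integer k ≥ 2 and every homogeneous polynomial P of degree k in the two commuting variables z and z̄ with complex coefficients, there exist a unique homogeneous polynomial A of degree k−2 and a unique homogeneous polynomial C of degree k such that P = A·(z² + z̄²) + C and (∂²/∂z² + ∂²/∂z̄²) C = 0. -/
/-!
For `A` homogeneous of degree `m`, Euler's identity gives `tr (A * Q) = Q * tr A + 4 (m + 1) A`
(`tr_mul_Q`). Taking `tr` of `P = A * Q + C`, the claim becomes: the equation
`Q * tr A + c * A = R`, with `c = 4 (m + 1)`, `m = k - 2` and `R = tr P`, has a unique solution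
`A` homogeneous of degree `m`. This is proved for every positive integer `c` by induction on `m`
in steps of two: applying `tr` to the equation shows that `B = tr A` solves the same kind of
equation, `Q * tr B + (4 (m - 1) + c) * B = tr R`, in degree `m - 2`, and `B` determines `A`
through `c * A = R - Q * B`. In degrees `0` and `1` the operator `tr` vanishes.
-/

open MvPolynomial

/-- The quadratic form `Q(z, z̄) = z² + z̄²`, where `X 0 = z` and `X 1 = z̄`. -/
noncomputable def Q : MvPolynomial (Fin 2) ℂ := X 0 ^ 2 + X 1 ^ 2

/-- The operator `tr = ∂²/∂z² + ∂²/∂z̄²`. -/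
noncomputable def tr (P : MvPolynomial (Fin 2) ℂ) : MvPolynomial (Fin 2) ℂ :=
  pderiv 0 (pderiv 0 P) + pderiv 1 (pderiv 1 P)

lemma tr_add (A B : MvPolynomial (Fin 2) ℂ) : tr (A + B) = tr A + tr B := by
  simp only [tr, map_add]; ring

lemma tr_sub (A B : MvPolynomial (Fin 2) ℂ) : tr (A - B) = tr A - tr B := by
  simp only [tr, map_sub]; ring

lemma tr_C_mul (a : ℂ) (A : MvPolynomial (Fin 2) ℂ) : tr (C a * A) = C a * tr A := by
  simp only [tr, pderiv_C_mul]; ring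

lemma Q_isHomogeneous : Q.IsHomogeneous 2 :=
  (isHomogeneous_X_pow 0 2).add (isHomogeneous_X_pow 1 2)

lemma tr_isHomogeneous {m : ℕ} {A : MvPolynomial (Fin 2) ℂ} (hA : A.IsHomogeneous m) :
    (tr A).IsHomogeneous (m - 2) :=
  hA.pderiv.pderiv.add hA.pderiv.pderiv

lemma pderiv_eq_zero_of_isHomogeneous_zero {A : MvPolynomial (Fin 2) ℂ}
    (hA : A.IsHomogeneous 0) (i : Fin 2) : pderiv i A = 0 := by
  have h := totalDegree_eq_zero_iff_eq_C.mp (Nat.le_zero.mp hA.totalDegree_le)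
  rw [h, pderiv_C]

lemma tr_eq_zero_of_lt_two {m : ℕ} (hm : m < 2) {A : MvPolynomial (Fin 2) ℂ}
    (hA : A.IsHomogeneous m) : tr A = 0 := by
  have h (i : Fin 2) : (pderiv i A).IsHomogeneous 0 := by
    have := hA.pderiv (i := i)
    rwa [show m - 1 = 0 by omega] at this
  simp only [tr, pderiv_eq_zero_of_isHomogeneous_zero (h _), add_zero]

/-- The commutator of `tr` with multiplication by `Q` is `4 (E + 1)`, where the Euler operator `E`
acts on homogeneous polynomials of degree `m` as multiplication by `m`. -/
lemma tr_mul_Q {m : ℕ} {A : MvPolynomial (Fin 2) ℂ} (hA : A.IsHomogeneous m) :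
    tr (A * Q) = Q * tr A + C (4 * (m + 1) : ℂ) * A := by
  have euler := hA.sum_X_mul_pderiv
  rw [Fin.sum_univ_two, nsmul_eq_mul] at euler
  have h01 : pderiv (0 : Fin 2) (X 1 : MvPolynomial (Fin 2) ℂ) = 0 :=
    pderiv_X_of_ne (by decide)
  have h10 : pderiv (1 : Fin 2) (X 0 : MvPolynomial (Fin 2) ℂ) = 0 :=
    pderiv_X_of_ne (by decide)
  have hC : (C (4 * (m + 1) : ℂ) : MvPolynomial (Fin 2) ℂ) = 4 * (m + 1) := by
    rw [C_mul, C_add, map_natCast, C_1, map_ofNat]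
  rw [hC]
  simp only [tr, Q, pow_two, map_add, Derivation.leibniz, smul_eq_mul, pderiv_X_self, h01, h10,
    mul_zero, add_zero, zero_add, mul_one]
  linear_combination 4 * euler

lemma C_mul_C_inv_mul {c : ℕ} (hc : 0 < c) (A : MvPolynomial (Fin 2) ℂ) :
    C (c : ℂ) * (C (c : ℂ)⁻¹ * A) = A := by
  rw [← mul_assoc, ← C_mul, mul_inv_cancel₀ (by exact_mod_cast hc.ne'), C_1, one_mul]

/-- Uniqueness for `Q * tr A + c * A = R` in degree `m`: `tr A` satisfies the homogeneous equation
in degree `m - 2` with constant `4 (m - 1) + c`, so it vanishes by induction. -/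
lemma eq_zero_of_Q_mul_tr_add (m : ℕ) : ∀ (c : ℕ) (_ : 0 < c) (A : MvPolynomial (Fin 2) ℂ),
    A.IsHomogeneous m → Q * tr A + C (c : ℂ) * A = 0 → A = 0 := by
  induction m using Nat.strong_induction_on with
  | _ m ih =>
    intro c hc A hA h
    have htr : tr A = 0 := by
      rcases lt_or_ge m 2 with hm | hm
      · exact tr_eq_zero_of_lt_two hm hA
      · have hB := tr_isHomogeneous hA
        refine ih (m - 2) (by omega) (4 * (m - 2 + 1) + c) (by omega) (tr A) hB ?_
        have h2 := congrArg tr h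
        rw [tr_add, tr_C_mul, mul_comm Q, tr_mul_Q hB] at h2
        have h0 : tr 0 = 0 := by simp [tr]
        rw [h0] at h2
        rw [← h2]
        push_cast
        simp only [C_add]
        ring
    rw [htr, mul_zero, zero_add] at h
    have hc' : (C (c : ℂ) : MvPolynomial (Fin 2) ℂ) ≠ 0 := by
      rw [Ne, C_eq_zero]; exact_mod_cast hc.ne'
    exact (mul_eq_zero.mp h).resolve_left hc'

/-- Solvability of `Q * tr A + c * A = R` in degree `m`. The solution is `A = (R - B * Q) / c`, where
`B` solves the equation in degree `m - 2` with constant `4 (m - 1) + c` and right-hand side `tr R`;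
this choice of `B` makes `tr A = B`. -/
lemma exists_Q_mul_tr_add (m : ℕ) : ∀ (c : ℕ) (_ : 0 < c) (R : MvPolynomial (Fin 2) ℂ),
    R.IsHomogeneous m →
      ∃ A : MvPolynomial (Fin 2) ℂ, A.IsHomogeneous m ∧ Q * tr A + C (c : ℂ) * A = R := by
  induction m using Nat.strong_induction_on with
  | _ m ih =>
    intro c hc R hR
    rcases lt_or_ge m 2 with hm | hm
    · refine ⟨C (c : ℂ)⁻¹ * R, hR.C_mul _, ?_⟩
      rw [tr_C_mul, tr_eq_zero_of_lt_two hm hR, C_mul_C_inv_mul hc, mul_zero, mul_zero, zero_add]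
    · obtain ⟨B, hB, h⟩ := ih (m - 2) (by omega) (4 * (m - 2 + 1) + c) (by omega) (tr R)
        (tr_isHomogeneous hR)
      have hBQ : (B * Q).IsHomogeneous m := by
        have := hB.mul Q_isHomogeneous
        rwa [Nat.sub_add_cancel hm] at this
      have htr : tr (R - B * Q) = C (c : ℂ) * B := by
        rw [tr_sub, tr_mul_Q hB, ← h]
        push_cast
        simp only [C_add]
        ring
      refine ⟨C (c : ℂ)⁻¹ * (R - B * Q), (hR.sub hBQ).C_mul _, ?_⟩
      rw [tr_C_mul, htr, C_mul_C_inv_mul hc, mul_left_comm (C (c : ℂ)⁻¹), C_mul_C_inv_mul hc]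
      ring

/-- Fischer decomposition: every homogeneous polynomial `P` of degree `k ≥ 2` in `ℂ[z, z̄]`
is uniquely `P = A·Q + C` with `A` homogeneous of degree `k − 2`, `C` homogeneous of degree
`k`, and `tr C = 0`. -/
theorem fischer_decomposition (k : ℕ) (hk : 2 ≤ k)
    (P : MvPolynomial (Fin 2) ℂ) (hP : P.IsHomogeneous k) :
    ∃! AC : MvPolynomial (Fin 2) ℂ × MvPolynomial (Fin 2) ℂ,
      AC.1.IsHomogeneous (k - 2) ∧ AC.2.IsHomogeneous k ∧
        P = AC.1 * Q + AC.2 ∧ tr AC.2 = 0 := by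
  have hcast : ((4 * (k - 2 + 1) : ℕ) : ℂ) = 4 * (((k - 2 : ℕ) : ℂ) + 1) := by push_cast; ring
  obtain ⟨A, hA, h⟩ := exists_Q_mul_tr_add (k - 2) (4 * (k - 2 + 1)) (by omega) (tr P)
    (tr_isHomogeneous hP)
  rw [hcast, ← tr_mul_Q hA] at h
  have hAQ : (A * Q).IsHomogeneous k := by
    have := hA.mul Q_isHomogeneous
    rwa [Nat.sub_add_cancel hk] at this
  refine ⟨(A, P - A * Q), ⟨hA, hP.sub hAQ, by ring, by rw [tr_sub, h, sub_self]⟩, ?_⟩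
  rintro ⟨A', C'⟩ ⟨hA', -, hP', hC'⟩
  dsimp only at hA' hP' hC'
  have hD : A' - A = 0 := by
    refine eq_zero_of_Q_mul_tr_add (k - 2) (4 * (k - 2 + 1)) (by omega) _ (hA'.sub hA) ?_
    rw [hcast, ← tr_mul_Q (hA'.sub hA), sub_mul, tr_sub, h, hP', tr_add, hC', add_zero, sub_self]
  obtain rfl := sub_eq_zero.mp hD
  rw [Prod.mk.injEq]
  exact ⟨rfl, by rw [hP']; ring⟩
end

section
/- Let a, b ∈ ℂ with a ≠ 0. The linear map (z, w) ↦ (a z, b w) of ℂ² maps the model surface {(z, w) ∈ ℂ² : w = z² + z̄²} onto itself if and only if b = a² and a² is real (equivalently, a is real or purely imaginary). -/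
/-!
If the surface is preserved, then `b (z² + z̄²) = a² z² + ā² z̄²` for every `z`. Taking `z = 1 + i`
(where `z² + z̄² = 0` and `z² = 2i`) gives `a² = ā²`, and then `z = 1` gives `b = a²`. Conversely,
if `b = a² = ā²`, that identity holds for every `z`, so the surface is mapped into itself; the
preimage of `(z, w)` is `(z / a, w / a²)`.
-/

/-- The model surface `{(z, w) ∈ ℂ² : w = z² + z̄²}`. -/
def modelSurface : Set (ℂ × ℂ) :=
  {p : ℂ × ℂ | p.2 = p.1 ^ 2 + (starRingEnd ℂ) p.1 ^ 2}

/-- For `a, b ∈ ℂ` with `a ≠ 0`, the linear map `(z, w) ↦ (a z, b w)` of `ℂ²` maps the model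
surface `{w = z² + z̄²}` onto itself if and only if `b = a²` and `a²` is real. -/
theorem linear_automorphisms_of_model (a b : ℂ) (ha : a ≠ 0) :
    (fun p : ℂ × ℂ => (a * p.1, b * p.2)) '' modelSurface = modelSurface ↔
      b = a ^ 2 ∧ (a ^ 2).im = 0 := by
  constructor
  · intro h
    have key : ∀ z : ℂ, b * (z ^ 2 + (starRingEnd ℂ) z ^ 2) =
        (a * z) ^ 2 + (starRingEnd ℂ) (a * z) ^ 2 := by
      intro z
      have hz : (a * z, b * (z ^ 2 + (starRingEnd ℂ) z ^ 2)) ∈ modelSurface := by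
        rw [← h]
        exact ⟨(z, z ^ 2 + (starRingEnd ℂ) z ^ 2), rfl, rfl⟩
      exact hz
    have h1 := key 1
    have h2 := key (1 + Complex.I)
    simp only [map_mul, map_add, map_one, Complex.conj_I] at h1 h2
    have hconj : (starRingEnd ℂ) a ^ 2 = a ^ 2 := by
      have h3 : 2 * Complex.I * ((starRingEnd ℂ) a ^ 2 - a ^ 2) = 0 := by
        linear_combination h2 +
          (-2 * b + a ^ 2 + (starRingEnd ℂ) a ^ 2) * Complex.I_sq
      have hI : 2 * Complex.I ≠ 0 := mul_ne_zero two_ne_zero Complex.I_ne_zero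
      exact sub_eq_zero.mp ((mul_eq_zero.mp h3).resolve_left hI)
    refine ⟨by linear_combination h1 / 2 + hconj / 2, ?_⟩
    rw [← Complex.conj_eq_iff_im, map_pow, hconj]
  · rintro ⟨rfl, him⟩
    rw [← Complex.conj_eq_iff_im, map_pow] at him
    ext ⟨z, w⟩
    constructor
    · rintro ⟨⟨u, v⟩, huv, hzw⟩
      obtain ⟨rfl, rfl⟩ := Prod.mk.inj hzw
      change v = u ^ 2 + (starRingEnd ℂ) u ^ 2 at huv
      change a ^ 2 * v = (a * u) ^ 2 + (starRingEnd ℂ) (a * u) ^ 2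
      rw [map_mul, mul_pow, mul_pow, him, huv]
      ring
    · intro hw
      change w = z ^ 2 + (starRingEnd ℂ) z ^ 2 at hw
      refine ⟨(z / a, w / a ^ 2), ?_, ?_⟩
      · change w / a ^ 2 = (z / a) ^ 2 + (starRingEnd ℂ) (z / a) ^ 2
        rw [map_div₀, div_pow, div_pow, him, hw]
        ring
      · exact Prod.ext (mul_div_cancel₀ z ha) (mul_div_cancel₀ w (pow_ne_zero 2 ha))
end
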